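/- Let N₁ : ℝ → ℝ satisfy N₁(G) ≥ 2 for all large G and ∫₂^{N₁(G)} (−P(t)) dt = a·G + O(1) as G → ∞. Let g : ℝ → ℝ satisfy g(T) − T ∼ (1−c)·T/ln T as T → ∞. Then ∫_{N₁(τ/(a(1−c)))}^{N₁(g(τ/(a(1−c))))} (−P(t)) dt ∼ τ/ln τ as τ → ∞. -/

import Mathlib

open Filter Real Asymptotics MeasureTheory

noncomputable def pichar (t : ℝ) : ℝ := (Nat.primeCounting ⌊t⌋₊ : ℝ)

noncomputable def P (t : ℝ) : ℝ := pichar t - ∫ u in (2:ℝ)..t, 1 / Real.log u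

noncomputable def a : ℝ := Real.exp 4.5

noncomputable def c : ℝ := Real.eulerMascheroniConstant

noncomputable def Z (t : ℝ) : ℝ := ‖riemannZeta (1/2 + (t : ℂ) * Complex.I)‖ ^ 2

/-!
If `F x - α * x` is bounded and `y - x ~ h` with `|h| → ∞`, then `F y - F x ~ α * h`: the bounded
errors are absorbed by `h`. Apply this to `F G = ∫ t in 2..N₁ G, -P t`, at `x = τ / (a * (1 - c))`
and `y = g x`; here `g x → ∞` because `x / log x = o(x)`. The outcome is
`a * (1 - c) * x / log x = τ / log x`, and `log x ~ log τ` because they differ by a constant.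
-/

theorem isEquivalent_comp_sub_comp_of_sub_mul_isBigO_one {ι 𝕜 : Type*} [NormedField 𝕜]
    {l : Filter ι} {l' : Filter 𝕜} {F : 𝕜 → 𝕜} {α : 𝕜} (hα : α ≠ 0)
    (hF : (fun x => F x - α * x) =O[l'] (fun _ => (1 : ℝ))) {x y h : ι → 𝕜}
    (hx : Tendsto x l l') (hy : Tendsto y l l') (hxy : (fun i => y i - x i) ~[l] h)
    (hh : Tendsto (fun i => ‖h i‖) l atTop) :
    (fun i => F (y i) - F (x i)) ~[l] fun i => α * h i := by
  have hlinear : (fun i => α * (y i - x i)) ~[l] fun i => α * h i :=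
    (IsEquivalent.refl (u := fun _ => α)).mul hxy
  have herror : (fun i => (F (y i) - α * y i) - (F (x i) - α * x i)) =o[l] fun i => α * h i := by
    have hone : (fun _ => (1 : ℝ)) =o[l] h := isLittleO_const_left.2 (Or.inr hh)
    have hsmall {z : ι → 𝕜} (hz : Tendsto z l l') : (fun i => F (z i) - α * z i) =o[l] h :=
      (hF.comp_tendsto hz).trans_isLittleO hone
    exact ((hsmall hy).sub (hsmall hx)).const_mul_right hα
  refine (hlinear.add_isLittleO herror).congr_left (.of_eq (funext fun i => ?_))
  simp only [Pi.add_apply]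
  ring

theorem tendsto_div_log_atTop : Tendsto (fun x => x / log x) atTop atTop := by
  refine ((tendsto_exp_div_pow_atTop 1).comp tendsto_log_atTop).congr' ?_
  filter_upwards [eventually_gt_atTop 0] with x hx
  simp only [Function.comp_apply, exp_log hx, pow_one]

theorem isLittleO_div_log_self_atTop : (fun x => x / log x) =o[atTop] fun x => x := by
  have hinv : (fun x => (log x)⁻¹) =o[atTop] fun _ => (1 : ℝ) :=
    (isLittleO_one_iff ℝ).2 tendsto_log_atTop.inv_tendsto_atTop
  simpa only [div_eq_mul_inv, mul_one] using (isBigO_refl (fun x : ℝ => x) atTop).mul_isLittleO hinv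

theorem tendsto_atTop_of_sub_isEquivalent_mul_div_log {g : ℝ → ℝ} {κ : ℝ}
    (hg : (fun x => g x - x) ~[atTop] fun x => κ * x / log x) : Tendsto g atTop atTop := by
  have hsmall : (fun x => κ * x / log x) =o[atTop] fun x => x := by
    simpa only [mul_div_assoc] using isLittleO_div_log_self_atTop.const_mul_left κ
  have hequiv : g ~[atTop] fun x => x := (hg.isBigO.trans_isLittleO hsmall).isEquivalent
  exact hequiv.symm.tendsto_atTop tendsto_id

theorem log_div_const_isEquivalent_log {k : ℝ} (hk : k ≠ 0) :
    (fun x => log (x / k)) ~[atTop] log := by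
  refine (IsEquivalent.refl.sub_isLittleO (isLittleO_const_log_atTop (c := log k))).congr_left ?_
  filter_upwards [eventually_ne_atTop 0] with x hx
  exact (log_div hx hk).symm

theorem integral_isEquivalent_of_integral_sub_mul_isBigO_one {ι : Type*} {l : Filter ι}
    {l' : Filter ℝ} {f N : ℝ → ℝ} {b α : ℝ} (hα : α ≠ 0)
    (hf : ∀ x, b ≤ x → IntervalIntegrable f volume b x) (hN_ge : ∀ᶠ G in l', b ≤ N G)
    (hN : (fun G => (∫ t in b..N G, f t) - α * G) =O[l'] (fun _ => (1 : ℝ))) {x y h : ι → ℝ}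
    (hx : Tendsto x l l') (hy : Tendsto y l l') (hxy : (fun i => y i - x i) ~[l] h)
    (hh : Tendsto (fun i => ‖h i‖) l atTop) :
    (fun i => ∫ t in N (x i)..N (y i), f t) ~[l] fun i => α * h i := by
  refine (isEquivalent_comp_sub_comp_of_sub_mul_isBigO_one hα hN hx hy hxy hh).congr_left ?_
  filter_upwards [hx.eventually hN_ge, hy.eventually hN_ge] with i hxi hyi
  exact intervalIntegral.integral_interval_sub_left (hf _ hyi) (hf _ hxi)

theorem monotone_pichar : Monotone pichar := fun _ _ hst =>
  Nat.cast_le.2 (Nat.monotone_primeCounting (Nat.floor_mono hst))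

theorem intervalIntegrable_one_div_log {x y : ℝ} (hx : 1 < x) (hy : 1 < y) :
    IntervalIntegrable (fun u => 1 / log u) volume x y := by
  refine ContinuousOn.intervalIntegrable fun u hu => ContinuousAt.continuousWithinAt ?_
  have hu_gt : 1 < u := (lt_inf_iff.2 ⟨hx, hy⟩).trans_le hu.1
  exact continuousAt_const.div (continuousAt_log (by linarith)) (log_pos hu_gt).ne'

theorem intervalIntegrable_P {x : ℝ} (hx : 1 < x) : IntervalIntegrable P volume 2 x :=
  monotone_pichar.intervalIntegrable.sub
    (intervalIntegral.continuousOn_primitive_interval'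
      (intervalIntegrable_one_div_log one_lt_two hx) Set.left_mem_uIcc).intervalIntegrable

theorem a_mul_one_sub_c_pos : 0 < a * (1 - c) :=
  mul_pos (exp_pos _) (sub_pos.2 (eulerMascheroniConstant_lt_two_thirds.trans (by norm_num)))

theorem stmt_10_general {f N g : ℝ → ℝ} {b α κ : ℝ} (hακ : 0 < α * κ)
    (hf : ∀ x, b ≤ x → IntervalIntegrable f volume b x) (hN_ge : ∀ᶠ G in atTop, b ≤ N G)
    (hN : (fun G => (∫ t in b..N G, f t) - α * G) =O[atTop] (fun _ => (1 : ℝ)))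
    (hg : (fun T => g T - T) ~[atTop] fun T => κ * T / log T) :
    (fun τ => ∫ t in N (τ / (α * κ))..N (g (τ / (α * κ))), f t)
      ~[atTop] fun τ => τ / log τ := by
  obtain ⟨hα, hκ⟩ : α ≠ 0 ∧ κ ≠ 0 := mul_ne_zero_iff.1 hακ.ne'
  have hincrement : Tendsto (fun T => ‖κ * T / log T‖) atTop atTop := by
    simp only [mul_div_assoc, norm_mul]
    exact (tendsto_norm_atTop_atTop.comp tendsto_div_log_atTop).const_mul_atTop (norm_pos_iff.2 hκ)
  have hintegral : (fun T => ∫ t in N T..N (g T), f t) ~[atTop] fun T => α * (κ * T / log T) :=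
    integral_isEquivalent_of_integral_sub_mul_isBigO_one hα hf hN_ge hN tendsto_id
      (tendsto_atTop_of_sub_isEquivalent_mul_div_log hg) hg hincrement
  calc (fun τ => ∫ t in N (τ / (α * κ))..N (g (τ / (α * κ))), f t)
      ~[atTop] fun τ => α * (κ * (τ / (α * κ)) / log (τ / (α * κ))) :=
        hintegral.comp_tendsto (tendsto_id.atTop_div_const hακ)
    _ = fun τ => τ / log (τ / (α * κ)) := by
        funext τ
        field_simp
    _ ~[atTop] fun τ => τ / log τ :=
        IsEquivalent.refl.div (log_div_const_isEquivalent_log hακ.ne')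

/-- Formula (4.3): after the substitution `a(1-c)T = τ` the increment of the Ingham
integral is asymptotic to `τ/ln τ`. -/
theorem stmt_10 (N₁ : ℝ → ℝ)
    (hN2 : ∀ᶠ G in atTop, 2 ≤ N₁ G)
    (hN : (fun G => (∫ t in (2:ℝ)..N₁ G, -P t) - a * G) =O[atTop] (fun _ => (1:ℝ)))
    (g : ℝ → ℝ)
    (hg1 : (fun T => g T - T) ~[atTop] (fun T => (1 - c) * T / Real.log T)) :
    (fun τ => ∫ t in N₁ (τ / (a * (1 - c)))..N₁ (g (τ / (a * (1 - c)))), -P t)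
      ~[atTop] (fun τ => τ / Real.log τ) :=
  stmt_10_general a_mul_one_sub_c_pos
    (fun x hx => (intervalIntegrable_P (by linarith)).neg) hN2 hN hg1
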